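/- For all integers N ≥ 0 and ℓ, the number of strongly concave compositions of N + |ℓ|(|ℓ|+1)/2 with rank ℓ satisfies V_d(ℓ, N + |ℓ|(|ℓ|+1)/2) = Σ_{n≥0} χ(n) · p(N − 2n(n+1)/3 − n|ℓ|), where χ(n) = 1 if n ≡ 0 (mod 3), χ(n) = 0 if n ≡ 1 (mod 3), χ(n) = −1 if n ≡ 2 (mod 3) (so χ(n) is the Kronecker symbol (−3/(2n+1)), and 2n(n+1)/3 is an integer whenever χ(n) ≠ 0), and where p(k) denotes the number of integer partitions of k, with the convention p(k) = 0 for k < 0. The sum is finite since p vanishes on negative arguments. -/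

import Mathlib

open scoped BigOperators

/-- `IsSCC n l k` says that the list `l = (a_1, ..., a_s)` of nonnegative integers
is a strongly concave composition of `n` with central part at (1-indexed) position `k`:
`a_1 > a_2 > ... > a_{k-1} > a_k < a_{k+1} < ... < a_s` and `a_1 + ... + a_s = n`. -/
def IsSCC (n : ℕ) (l : List ℕ) (k : ℕ) : Prop :=
  1 ≤ k ∧ k ≤ l.length ∧ l.sum = n ∧
  (∀ i j : Fin l.length, (i : ℕ) < j → (j : ℕ) < k → l.get j < l.get i) ∧
  (∀ i j : Fin l.length, k - 1 ≤ (i : ℕ) → (i : ℕ) < j → l.get i < l.get j)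

/-- The rank `s - 2k + 1` of a strongly concave composition with `s` parts and
central part at position `k`. -/
def sccRank (l : List ℕ) (k : ℕ) : ℤ := (l.length : ℤ) - 2 * k + 1

/-- `Vd m n` is the number of strongly concave compositions of `n` with rank `m`. -/
noncomputable def Vd (m : ℤ) (n : ℕ) : ℕ :=
  Set.ncard {p : List ℕ × ℕ | IsSCC n p.1 p.2 ∧ sccRank p.1 p.2 = m}

/-- `VdTotal n` is the total number of strongly concave compositions of `n`. -/
noncomputable def VdTotal (n : ℕ) : ℕ :=
  Set.ncard {p : List ℕ × ℕ | IsSCC n p.1 p.2}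

/-- The partition function, extended by `0` to negative integers. -/
def partitionCount (k : ℤ) : ℕ :=
  if 0 ≤ k then Fintype.card (Nat.Partition k.toNat) else 0

/-- The Kronecker symbol `(-3 / (2n+1))` as a function of `n`. -/
def chi (n : ℕ) : ℤ :=
  if n % 3 = 0 then 1 else if n % 3 = 1 then 0 else -1

/-!
Lowering the parts to the left and to the right of the central part `c` by `c + 1` turns a strongly
concave composition into a number `c` and two finite sets `A`, `B` of naturals, with rank
`#B - #A`. Exchanging `A` and `B` negates the rank, so let `#A = #B + l` with `l ≥ 0`. Summing first
over `A` and `B` (the series `pairSeries e l`) and then over `c` (the series `concaveSeries e l`)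
gives `q ^ l * concaveSeries 1 l` as generating function.

Splitting off the element `0` of `A` or of `B` gives two contiguous relations for `pairSeries`. They
imply `pairSeries 0 l = q ^ (l choose 2) * pairSeries 0 0`, and `l → ∞` identifies `pairSeries 0 0`
with the generating function `P` of partitions. They also give two expressions of
`pairSeries e (l + 1)` through `concaveSeries`: in each case the defect `D` satisfies
`D e = q ^ (l + 1) * D (e + 2)`, so it is divisible by every power of `q`. Eliminating
`concaveSeries 2 (l + 2)` between them leaves a recursion from `l` to `l + 4` for
`concaveSeries 1 l`, which `q ^ (l choose 2) * ∑ χ(n) q ^ (2n(n+1)/3 + nl) * P` also satisfies, and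
whose solution is unique by the same divisibility argument.
-/

open Finset PowerSeries
open scoped PowerSeries.WithPiTopology

section PowerSeriesSums

variable {R ι : Type*} [CommRing R]

theorem eq_zero_of_forall_exists_X_mul_dvd {D : ι → R⟦X⟧}
    (h : ∀ i, ∃ j, X * D j ∣ D i) (i : ι) : D i = 0 := by
  have X_pow_dvd (n : ℕ) : ∀ i, X ^ n ∣ D i := by
    induction n with
    | zero => simp
    | succ n ih =>
      intro i
      obtain ⟨j, hj⟩ := h i
      exact (pow_succ' (X : R⟦X⟧) n ▸ mul_dvd_mul_left X (ih j)).trans hj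
  ext n
  exact X_pow_dvd_iff.1 (X_pow_dvd (n + 1) i) n n.lt_succ_self

variable [TopologicalSpace R]

theorem summable_X_pow_mul {w : ι → ℕ} (hw : ∀ n, {i | w i ≤ n}.Finite) (f : ι → R⟦X⟧) :
    Summable fun i ↦ X ^ w i * f i := by
  refine (WithPiTopology.summable_iff_summable_coeff R).2 fun n ↦
    summable_of_hasFiniteSupport ((hw n).subset fun i hi ↦ ?_)
  by_contra h
  exact hi ((coeff_X_pow_mul' _ _ _).trans (if_neg h))

theorem summable_X_pow {w : ι → ℕ} (hw : ∀ n, {i | w i ≤ n}.Finite) :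
    Summable fun i ↦ (X : R⟦X⟧) ^ w i :=
  (summable_X_pow_mul hw fun _ ↦ (1 : R⟦X⟧)).congr fun _ ↦ mul_one _

theorem summable_X_pow_succ_mul (a : ℕ) (f : ℕ → R⟦X⟧) :
    Summable fun k ↦ X ^ ((a + 1) * k) * f k :=
  summable_X_pow_mul (fun n ↦ (Set.finite_Iic n).subset fun k hk ↦
    (Nat.le_mul_of_pos_left k a.succ_pos).trans hk) f

variable [T2Space R]

theorem coeff_tsum_X_pow {w : ι → ℕ} (hw : ∀ n, {i | w i ≤ n}.Finite) (s : Set ι) (n : ℕ) :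
    coeff n (∑' i : s, (X : R⟦X⟧) ^ w i) = ({i ∈ s | w i = n}.ncard : R) := by
  have fiber_finite : {i ∈ s | w i = n}.Finite := (hw n).subset fun i hi ↦ hi.2.le
  have summable : Summable fun i : s ↦ (X : R⟦X⟧) ^ w i :=
    summable_X_pow fun n ↦ (hw n).preimage Subtype.val_injective.injOn
  calc coeff n (∑' i : s, (X : R⟦X⟧) ^ w i)
      = ∑' i : s, coeff n ((X : R⟦X⟧) ^ w i) :=
        summable.map_tsum (coeff n) (WithPiTopology.continuous_coeff R n)
    _ = ∑' i, s.indicator (fun i ↦ coeff n ((X : R⟦X⟧) ^ w i)) i :=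
        tsum_subtype s fun i ↦ coeff n ((X : R⟦X⟧) ^ w i)
    _ = ∑ i ∈ fiber_finite.toFinset, s.indicator (fun i ↦ coeff n ((X : R⟦X⟧) ^ w i)) i :=
        tsum_eq_sum fun i hi ↦ by
          refine Set.indicator_apply_eq_zero.2 fun hs ↦ ?_
          rw [coeff_X_pow, if_neg fun h ↦ hi (fiber_finite.mem_toFinset.2 ⟨hs, h.symm⟩)]
    _ = ∑ i ∈ fiber_finite.toFinset, 1 :=
        sum_congr rfl fun i hi ↦ by
          obtain ⟨hs, rfl⟩ := fiber_finite.mem_toFinset.1 hi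
          rw [Set.indicator_of_mem hs, coeff_X_pow_self]
    _ = ({i ∈ s | w i = n}.ncard : R) := by
        rw [sum_const, nsmul_one, Set.ncard_eq_toFinset_card _ fiber_finite]

theorem X_pow_dvd_tsum {n : ℕ} {f : ι → R⟦X⟧} (hf : Summable f) (h : ∀ i, X ^ n ∣ f i) :
    X ^ n ∣ ∑' i, f i :=
  X_pow_dvd_iff.2 fun m hm ↦ by
    rw [hf.map_tsum _ (WithPiTopology.continuous_coeff R m)]
    exact (tsum_congr fun i ↦ X_pow_dvd_iff.1 (h i) m hm).trans tsum_zero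

end PowerSeriesSums

/-- The generating function of the `k`-element sets of natural numbers, by sum of elements. -/
noncomputable def distinctSeries (k : ℕ) : ℤ⟦X⟧ :=
  ∑' A : {A : Finset ℕ | #A = k}, X ^ ∑ a ∈ A.1, a

theorem finite_setOf_sum_le (n : ℕ) : {A : Finset ℕ | ∑ a ∈ A, a ≤ n}.Finite :=
  (range (n + 1)).powerset.finite_toSet.subset fun A hA ↦ by
    simp only [coe_powerset, Set.mem_preimage, Set.mem_powerset_iff, coe_subset]
    exact fun a ha ↦ mem_range_succ_iff.2 ((single_le_sum (fun _ _ ↦ Nat.zero_le _) ha).trans hA)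

/-- The translate `{a + d | a ∈ A}`. -/
def shift (d : ℕ) (A : Finset ℕ) : Finset ℕ := A.map (addRightEmbedding d)

theorem shift_injective (d : ℕ) : Function.Injective (shift d) := map_injective _

theorem card_shift (d : ℕ) (A : Finset ℕ) : #(shift d A) = #A := card_map _

theorem sum_shift (d : ℕ) (A : Finset ℕ) : ∑ a ∈ shift d A, a = ∑ a ∈ A, a + d * #A := by
  simp [shift, sum_add_distrib, mul_comm]

theorem le_of_mem_shift {d a : ℕ} {A : Finset ℕ} (ha : a ∈ shift d A) : d ≤ a := by
  obtain ⟨b, -, rfl⟩ := mem_map.1 ha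
  exact Nat.le_add_left d b

theorem exists_shift_eq {d : ℕ} {A : Finset ℕ} (hA : ∀ a ∈ A, d ≤ a) : ∃ B, shift d B = A := by
  refine ⟨A.image (· - d), ext fun a ↦ ?_⟩
  simp only [shift, mem_map, mem_image, addRightEmbedding_apply]
  grind

theorem zero_notMem_shift_one (A : Finset ℕ) : 0 ∉ shift 1 A :=
  fun h ↦ absurd (le_of_mem_shift h) (by decide)

theorem insert_zero_shift_one_injective :
    Function.Injective fun A ↦ insert 0 (shift 1 A) := fun A B h ↦ by
  apply shift_injective 1
  simpa only [erase_insert (zero_notMem_shift_one _)] using congrArg (erase · 0) h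

theorem setOf_card_eq_succ (k : ℕ) :
    {A : Finset ℕ | #A = k + 1} =
      shift 1 '' {A | #A = k + 1} ∪ (fun A ↦ insert 0 (shift 1 A)) '' {A | #A = k} := by
  ext A
  constructor
  · intro hA
    by_cases h : 0 ∈ A
    · obtain ⟨B, hB⟩ := exists_shift_eq (d := 1) (A := A.erase 0) (by grind)
      refine Or.inr ⟨B, ?_, by simp only [hB, insert_erase h]⟩
      rw [Set.mem_ofPred_eq, ← card_shift 1, hB, card_erase_of_mem h, hA, Nat.add_sub_cancel]
    · obtain ⟨B, rfl⟩ := exists_shift_eq (d := 1) (A := A) (by grind)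
      exact Or.inl ⟨B, (card_shift 1 B).symm.trans hA, rfl⟩
  · rintro (⟨B, hB, rfl⟩ | ⟨B, rfl, rfl⟩)
    · exact (card_shift 1 B).trans hB
    · simp only [Set.mem_ofPred_eq, card_insert_of_notMem (zero_notMem_shift_one B), card_shift]

theorem distinctSeries_zero : distinctSeries 0 = 1 := by
  have setOf_card_eq_zero : {A : Finset ℕ | #A = 0} = {∅} := by
    ext A
    exact card_eq_zero
  rw [distinctSeries, setOf_card_eq_zero, tsum_singleton ∅ fun A : Finset ℕ ↦ X ^ ∑ a ∈ A, a]
  simp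

theorem summable_X_pow_sum (s : Set (Finset ℕ)) :
    Summable fun A : s ↦ (X : ℤ⟦X⟧) ^ ∑ a ∈ A.1, a :=
  summable_X_pow fun n ↦ (finite_setOf_sum_le n).preimage Subtype.val_injective.injOn

theorem distinctSeries_succ (k : ℕ) :
    distinctSeries (k + 1) = X ^ (k + 1) * distinctSeries (k + 1) + X ^ k * distinctSeries k := by
  have disjoint : Disjoint (shift 1 '' {A | #A = k + 1})
      ((fun A ↦ insert 0 (shift 1 A)) '' {A | #A = k}) := by
    rw [Set.disjoint_left]
    rintro _ ⟨A, -, rfl⟩ ⟨B, -, h⟩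
    exact zero_notMem_shift_one A (h ▸ mem_insert_self 0 _)
  conv_lhs => rw [distinctSeries, setOf_card_eq_succ]
  rw [Summable.tsum_union_disjoint (f := fun A : Finset ℕ ↦ (X : ℤ⟦X⟧) ^ ∑ a ∈ A, a) disjoint
      (summable_X_pow_sum _) (summable_X_pow_sum _),
    tsum_image (fun A : Finset ℕ ↦ (X : ℤ⟦X⟧) ^ ∑ a ∈ A, a) (shift_injective 1).injOn,
    tsum_image (fun A : Finset ℕ ↦ (X : ℤ⟦X⟧) ^ ∑ a ∈ A, a) insert_zero_shift_one_injective.injOn,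
    distinctSeries, distinctSeries, ← (summable_X_pow_sum _).tsum_mul_left,
    ← (summable_X_pow_sum _).tsum_mul_left]
  congr 1 <;> refine tsum_congr fun ⟨A, hA⟩ ↦ ?_
  · rw [← pow_add, sum_shift, one_mul, hA, add_comm]
  · rw [← pow_add, sum_insert (zero_notMem_shift_one A), zero_add, sum_shift, one_mul, hA, add_comm]

theorem prod_one_sub_X_pow_mul_distinctSeries (k : ℕ) :
    (∏ i ∈ range k, (1 - X ^ (i + 1))) * distinctSeries k = X ^ k.choose 2 := by
  induction k with
  | zero => simp [distinctSeries_zero]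
  | succ k ih =>
    have step : (1 - X ^ (k + 1)) * distinctSeries (k + 1) = X ^ k * distinctSeries k := by
      linear_combination distinctSeries_succ k
    rw [prod_range_succ, mul_assoc, step, mul_left_comm, ih, ← pow_add, Nat.choose_succ_succ',
      Nat.choose_one_right]

theorem X_pow_choose_two_dvd_distinctSeries {m k : ℕ} (h : m ≤ k) :
    X ^ m.choose 2 ∣ distinctSeries k := by
  have isUnit : IsUnit (∏ i ∈ range k, (1 - X ^ (i + 1)) : ℤ⟦X⟧) := by
    simp [isUnit_iff_constantCoeff]
  rw [← isUnit.dvd_mul_left, prod_one_sub_X_pow_mul_distinctSeries]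
  exact pow_dvd_pow X (Nat.choose_le_choose 2 h)

/-- The generating function of the pairs of finite sets of natural numbers `(A, B)` with
`#A = #B + m`, a pair having weight `∑ A + ∑ B + (e + 1) * #B`. Shifting the parameter to `e + 1`
makes it positive, so that summability over `#B` is immediate. -/
noncomputable def pairSeries (e m : ℕ) : ℤ⟦X⟧ :=
  ∑' k, X ^ ((e + 1) * k) * (distinctSeries (k + m) * distinctSeries k)

theorem summable_pairSeries (e m : ℕ) :
    Summable fun k ↦ X ^ ((e + 1) * k) * (distinctSeries (k + m) * distinctSeries k) :=
  summable_X_pow_succ_mul e _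

theorem pairSeries_succ_right (e m : ℕ) :
    pairSeries e (m + 1) =
      X ^ (m + 1) * pairSeries (e + 1) (m + 1) + X ^ m * pairSeries (e + 1) m := by
  simp only [pairSeries]
  rw [← (summable_pairSeries _ _).tsum_mul_left, ← (summable_pairSeries _ _).tsum_mul_left,
    ← ((summable_pairSeries _ _).mul_left _).tsum_add ((summable_pairSeries _ _).mul_left _)]
  refine tsum_congr fun k ↦ ?_
  linear_combination X ^ ((e + 1) * k) * distinctSeries k * distinctSeries_succ (k + m)

theorem pairSeries_eq_add_tsum (e m : ℕ) :
    pairSeries e m = distinctSeries m + ∑' k, X ^ ((e + 1) * (k + 1)) *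
      (distinctSeries (k + 1 + m) * distinctSeries (k + 1)) := by
  rw [pairSeries, (summable_pairSeries e m).tsum_eq_zero_add]
  simp [distinctSeries_zero]

theorem pairSeries_eq_add (e m : ℕ) :
    pairSeries e m = pairSeries (e + 1) m + X ^ (e + 1) * pairSeries (e + 1) (m + 1) := by
  rw [pairSeries_eq_add_tsum e m, pairSeries_eq_add_tsum (e + 1) m, pairSeries,
    ← (summable_pairSeries _ _).tsum_mul_left, add_assoc,
    ← ((summable_nat_add_iff 1).2 (summable_pairSeries (e + 1) m)).tsum_add
      ((summable_pairSeries _ _).mul_left _)]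
  congr 1
  refine tsum_congr fun k ↦ ?_
  rw [show k + 1 + m = k + (m + 1) by ring]
  linear_combination
    X ^ ((e + 1) * (k + 1)) * distinctSeries (k + (m + 1)) * distinctSeries_succ k

theorem pairSeries_zero_left (m : ℕ) : pairSeries 0 m = X ^ m.choose 2 * pairSeries 0 0 := by
  induction m with
  | zero => simp
  | succ m ih =>
    have step : pairSeries 0 (m + 1) = X ^ m * pairSeries 0 m := by
      rw [pairSeries_succ_right, pairSeries_eq_add 0 m]
      ring
    rw [step, ih, ← mul_assoc, ← pow_add, Nat.choose_succ_succ', Nat.choose_one_right]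

theorem X_pow_choose_two_dvd_pairSeries (e m : ℕ) : X ^ m.choose 2 ∣ pairSeries e m :=
  X_pow_dvd_tsum (summable_pairSeries e m) fun k ↦ Dvd.dvd.mul_left
    (Dvd.dvd.mul_right (X_pow_choose_two_dvd_distinctSeries (Nat.le_add_left m k)) _) _

theorem X_pow_dvd_pairSeries_sub_distinctSeries (m : ℕ) :
    X ^ ((m + 1).choose 2 + 1) ∣ pairSeries 0 m - distinctSeries m := by
  rw [pairSeries_eq_add_tsum, add_sub_cancel_left]
  refine X_pow_dvd_tsum ((summable_nat_add_iff 1).2 (summable_pairSeries 0 m)) fun k ↦ ?_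
  rw [pow_succ']
  exact mul_dvd_mul (dvd_pow_self X (by simp))
    (Dvd.dvd.mul_right (X_pow_choose_two_dvd_distinctSeries (by omega)) _)

/-- The generating function of the partition function. -/
def partitionSeries : ℤ⟦X⟧ := mk fun n ↦ (Fintype.card (Nat.Partition n) : ℤ)

theorem hasProd_partitionSeries :
    HasProd (fun i ↦ ∑' j : ℕ, (X : ℤ⟦X⟧) ^ ((i + 1) * j)) partitionSeries := by
  simpa [Nat.Partition.restricted, partitionSeries] using
    Nat.Partition.hasProd_powerSeriesMk_card_restricted ℤ fun _ ↦ True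

theorem partitionSeries_mul_tprod :
    partitionSeries * ∏' i, (1 - (X : ℤ⟦X⟧) ^ (i + 1)) = 1 := by
  have geometric (i : ℕ) : (∑' j : ℕ, (X : ℤ⟦X⟧) ^ ((i + 1) * j)) * (1 - X ^ (i + 1)) = 1 := by
    simpa only [pow_mul] using
      WithPiTopology.tsum_pow_mul_one_sub_of_constantCoeff_eq_zero
        (f := (X : ℤ⟦X⟧) ^ (i + 1)) (by simp)
  rw [← hasProd_partitionSeries.tprod_eq, ← hasProd_partitionSeries.multipliable.tprod_mul
    (WithPiTopology.multipliable_one_sub_X_pow ℤ)]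
  simp only [geometric, tprod_one]

theorem X_pow_dvd_pairSeries_mul_prod_sub_one (m : ℕ) :
    X ^ (m + 1) ∣ pairSeries 0 0 * ∏ i ∈ range m, (1 - X ^ (i + 1)) - 1 := by
  have X_pow_ne_zero : (X : ℤ⟦X⟧) ^ m.choose 2 ≠ 0 := pow_ne_zero _ X_ne_zero
  have exponent : (m + 1).choose 2 + 1 = m.choose 2 + (m + 1) := by
    rw [Nat.choose_succ_succ', Nat.choose_one_right]
    ring
  rw [← mul_dvd_mul_iff_left X_pow_ne_zero, ← pow_add, ← exponent]
  convert! (X_pow_dvd_pairSeries_sub_distinctSeries m).mul_left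
    (∏ i ∈ range m, (1 - X ^ (i + 1))) using 1
  rw [mul_sub, mul_sub, prod_one_sub_X_pow_mul_distinctSeries, pairSeries_zero_left m]
  ring

theorem pairSeries_zero_zero_mul_tprod :
    pairSeries 0 0 * ∏' i, (1 - (X : ℤ⟦X⟧) ^ (i + 1)) = 1 := by
  refine tendsto_nhds_unique
    ((WithPiTopology.multipliable_one_sub_X_pow ℤ).hasProd.tendsto_prod_nat.const_mul _) ?_
  refine (WithPiTopology.tendsto_iff_coeff_tendsto ℤ _ _ _).2 fun n ↦
    tendsto_atTop_of_eventually_const (i₀ := n) fun m hm ↦ ?_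
  rw [← sub_eq_zero, ← map_sub]
  exact X_pow_dvd_iff.1 (X_pow_dvd_pairSeries_mul_prod_sub_one m) n (by omega)

theorem pairSeries_zero_zero : pairSeries 0 0 = partitionSeries :=
  mul_right_cancel₀ (WithPiTopology.tprod_one_sub_X_pow_ne_zero ℤ)
    (pairSeries_zero_zero_mul_tprod.trans partitionSeries_mul_tprod.symm)

theorem coeff_X_pow_mul_partitionSeries (i n : ℕ) :
    coeff n (X ^ i * partitionSeries) = (partitionCount ((n : ℤ) - i) : ℤ) := by
  rw [coeff_X_pow_mul', partitionCount]
  split_ifs with h h' h'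
  · rw [partitionSeries, coeff_mk, ← Nat.cast_sub h, Int.toNat_natCast]
  · omega
  · omega
  · rfl

/-- The generating function of the triples `(c, A, B)` of a natural number and two finite sets of
natural numbers with `#A = #B + l`, such a triple having weight
`(l + 1) * c + (e + 2 * c + 1) * #B + ∑ A + ∑ B`. -/
noncomputable def concaveSeries (e l : ℕ) : ℤ⟦X⟧ :=
  ∑' c, X ^ ((l + 1) * c) * pairSeries (e + 2 * c) l

theorem summable_concaveSeries (e l : ℕ) :
    Summable fun c ↦ X ^ ((l + 1) * c) * pairSeries (e + 2 * c) l :=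
  summable_X_pow_succ_mul l _

theorem concaveSeries_eq_add (e l : ℕ) :
    concaveSeries e l = pairSeries e l + X ^ (l + 1) * concaveSeries (e + 2) l := by
  rw [concaveSeries, (summable_concaveSeries e l).tsum_eq_zero_add, mul_zero, mul_zero, pow_zero,
    one_mul, add_zero, concaveSeries, ← (summable_concaveSeries _ _).tsum_mul_left]
  congr 1
  refine tsum_congr fun c ↦ ?_
  rw [show e + 2 * (c + 1) = e + 2 + 2 * c by ring]
  ring

theorem X_pow_choose_two_dvd_concaveSeries (e l : ℕ) : X ^ l.choose 2 ∣ concaveSeries e l :=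
  X_pow_dvd_tsum (summable_concaveSeries e l) fun _ ↦
    (X_pow_choose_two_dvd_pairSeries _ l).mul_left _

theorem pairSeries_succ_eq_concaveSeries_succ (l e : ℕ) :
    pairSeries e (l + 1) =
      X ^ l * concaveSeries (e + 1) l + X ^ (e + l + 3) * concaveSeries (e + 2) (l + 2) := by
  refine sub_eq_zero.1 (eq_zero_of_forall_exists_X_mul_dvd (D := fun e ↦ pairSeries e (l + 1) -
    (X ^ l * concaveSeries (e + 1) l + X ^ (e + l + 3) * concaveSeries (e + 2) (l + 2)))
    (fun e ↦ ⟨e + 2, X ^ l, ?_⟩) e)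
  linear_combination pairSeries_succ_right e l + X ^ (l + 1) * pairSeries_eq_add (e + 1) (l + 1) -
    X ^ l * concaveSeries_eq_add (e + 1) l -
    X ^ (e + l + 3) * concaveSeries_eq_add (e + 2) (l + 2)

theorem pairSeries_succ_eq_concaveSeries_add_two (l e : ℕ) :
    pairSeries e (l + 1) =
      X ^ l * concaveSeries (e + 2) l + X ^ (e + 1) * concaveSeries (e + 1) (l + 2) := by
  refine sub_eq_zero.1 (eq_zero_of_forall_exists_X_mul_dvd (D := fun e ↦ pairSeries e (l + 1) -
    (X ^ l * concaveSeries (e + 2) l + X ^ (e + 1) * concaveSeries (e + 1) (l + 2)))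
    (fun e ↦ ⟨e + 2, X ^ l, ?_⟩) e)
  linear_combination pairSeries_eq_add e (l + 1) + pairSeries_succ_right (e + 1) l -
    X ^ l * concaveSeries_eq_add (e + 2) l - X ^ (e + 1) * concaveSeries_eq_add (e + 1) (l + 2)

theorem X_pow_mul_concaveSeries_one (l : ℕ) :
    X ^ l * concaveSeries 1 l = X ^ (l + 1).choose 2 * (1 - X ^ (2 * l + 4)) * partitionSeries +
      X ^ 2 * concaveSeries 1 (l + 4) := by
  have at_self := pairSeries_succ_eq_concaveSeries_succ l 0
  have at_add_two := pairSeries_succ_eq_concaveSeries_add_two (l + 2) 0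
  rw [pairSeries_zero_left, pairSeries_zero_zero] at at_self at_add_two
  have exponent : (l + 2 + 1).choose 2 = (l + 1).choose 2 + (2 * l + 3) := by
    simp only [Nat.choose_succ_succ', zero_add, Nat.choose_one_right, Nat.choose_zero_right]
    ring
  rw [exponent] at at_add_two
  linear_combination X * at_add_two - at_self

/-- The partial theta series `∑ χ(n) q ^ (2n(n+1)/3 + nl)`. The truncated division is exact
whenever `χ(n) ≠ 0`. -/
noncomputable def partialTheta (l : ℕ) : ℤ⟦X⟧ :=
  ∑' n, X ^ (2 * n * (n + 1) / 3 + n * l) * C (chi n)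

theorem summable_X_pow_partialTheta_mul (l : ℕ) (f : ℕ → ℤ⟦X⟧) :
    Summable fun n ↦ X ^ (2 * n * (n + 1) / 3 + n * l) * f n :=
  summable_X_pow_mul (fun N ↦ (Set.finite_Iic N).subset fun n hn ↦ by
    have : n ≤ 2 * n * (n + 1) / 3 :=
      (Nat.le_div_iff_mul_le three_pos).2 (by nlinarith [Nat.le_mul_self n])
    exact this.trans ((Nat.le_add_right _ _).trans hn)) f

theorem chi_add_three (n : ℕ) : chi (n + 3) = chi n := by
  simp only [chi, Nat.add_mod_right]

theorem partialTheta_eq_add (l : ℕ) :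
    partialTheta l = 1 - X ^ (2 * l + 4) + X ^ (3 * l + 8) * partialTheta (l + 4) := by
  have exponent (n : ℕ) : 2 * (n + 3) * (n + 3 + 1) / 3 + (n + 3) * l =
      3 * l + 8 + (2 * n * (n + 1) / 3 + n * (l + 4)) := by
    rw [show 2 * (n + 3) * (n + 3 + 1) = 2 * n * (n + 1) + 3 * (4 * n + 8) by ring,
      Nat.add_mul_div_left _ _ three_pos]
    ring
  rw [partialTheta, ← (summable_X_pow_partialTheta_mul l _).sum_add_tsum_nat_add 3, partialTheta,
    ← (summable_X_pow_partialTheta_mul _ _).tsum_mul_left]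
  congr 1
  · simp [sum_range_succ, chi, add_comm, sub_eq_add_neg]
  · simp only [exponent, chi_add_three, pow_add _ (3 * l + 8), mul_assoc (X ^ (3 * l + 8))]

theorem concaveSeries_one (l : ℕ) :
    concaveSeries 1 l = X ^ l.choose 2 * (partialTheta l * partitionSeries) := by
  choose U hU using X_pow_choose_two_dvd_concaveSeries 1
  have U_eq (l : ℕ) :
      U l = (1 - X ^ (2 * l + 4)) * partitionSeries + X ^ (3 * l + 8) * U (l + 4) := by
    have recursion := X_pow_mul_concaveSeries_one l
    have exponent : (l + 4).choose 2 + 2 = (l + 1).choose 2 + (3 * l + 8) := by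
      simp only [Nat.choose_succ_succ', zero_add, Nat.choose_one_right, Nat.choose_zero_right]
      ring
    rw [hU, hU, ← mul_assoc, ← mul_assoc, ← pow_add, ← pow_add, add_comm 2, exponent,
      show l + l.choose 2 = (l + 1).choose 2 by
        rw [Nat.choose_succ_succ', Nat.choose_one_right]] at recursion
    refine mul_left_cancel₀ (pow_ne_zero ((l + 1).choose 2) X_ne_zero) ?_
    linear_combination recursion
  have difference_eq_zero (l : ℕ) : U l - partialTheta l * partitionSeries = 0 :=
    eq_zero_of_forall_exists_X_mul_dvd (D := fun l ↦ U l - partialTheta l * partitionSeries)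
      (fun l ↦ ⟨l + 4, X ^ (3 * l + 7), by
        linear_combination U_eq l - partitionSeries * partialTheta_eq_add l⟩) l
  rw [hU, sub_eq_zero.1 (difference_eq_zero l)]

theorem coeff_partialTheta_mul_partitionSeries (l N : ℕ) :
    coeff N (partialTheta l * partitionSeries) =
      ∑' n : ℕ, chi n * partitionCount ((N : ℤ) - 2 * n * (n + 1) / 3 - n * l) := by
  have termwise (n : ℕ) : X ^ (2 * n * (n + 1) / 3 + n * l) * C (chi n) * partitionSeries =
      C (chi n) * (X ^ (2 * n * (n + 1) / 3 + n * l) * partitionSeries) := by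
    ring
  rw [partialTheta, ← (summable_X_pow_partialTheta_mul l _).tsum_mul_right,
    ((summable_X_pow_partialTheta_mul l _).mul_right _).map_tsum _
      (WithPiTopology.continuous_coeff ℤ N)]
  refine tsum_congr fun n ↦ ?_
  rw [termwise, coeff_C_mul, coeff_X_pow_mul_partitionSeries]
  push_cast
  rw [sub_sub]

theorem finite_setOf_sum_add_sum_le (n : ℕ) :
    {p : Finset ℕ × Finset ℕ | ∑ a ∈ p.1, a + ∑ b ∈ p.2, b ≤ n}.Finite :=
  ((finite_setOf_sum_le n).prod (finite_setOf_sum_le n)).subset fun _ hp ↦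
    ⟨(Nat.le_add_right _ _).trans hp, (Nat.le_add_left _ _).trans hp⟩

theorem summable_X_pow_sum_add_sum (j k : ℕ) :
    Summable fun p : {A : Finset ℕ | #A = j} × {B : Finset ℕ | #B = k} ↦
      (X : ℤ⟦X⟧) ^ (∑ a ∈ p.1.1, a + ∑ b ∈ p.2.1, b) :=
  summable_X_pow fun n ↦ (finite_setOf_sum_add_sum_le n).preimage
    (f := Prod.map Subtype.val Subtype.val)
    (Subtype.val_injective.prodMap Subtype.val_injective).injOn

theorem distinctSeries_mul_distinctSeries (j k : ℕ) :
    distinctSeries j * distinctSeries k =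
      ∑' p : {A : Finset ℕ | #A = j} × {B : Finset ℕ | #B = k},
        X ^ (∑ a ∈ p.1.1, a + ∑ b ∈ p.2.1, b) := by
  have summable := summable_X_pow_sum_add_sum j k
  simp only [pow_add] at summable ⊢
  exact (summable_X_pow_sum _).tsum_mul_tsum (summable_X_pow_sum _) summable

theorem summable_X_pow_mul_card_add (e m : ℕ) :
    Summable fun p : {p : Finset ℕ × Finset ℕ | #p.1 = #p.2 + m} ↦
      (X : ℤ⟦X⟧) ^ ((e + 1) * #p.1.2 + (∑ a ∈ p.1.1, a + ∑ b ∈ p.1.2, b)) :=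
  summable_X_pow fun n ↦ ((finite_setOf_sum_add_sum_le n).preimage
    Subtype.val_injective.injOn).subset fun _ hp ↦ (Nat.le_add_left _ _).trans hp

theorem pairSeries_eq_tsum (e m : ℕ) :
    pairSeries e m = ∑' p : {p : Finset ℕ × Finset ℕ | #p.1 = #p.2 + m},
      X ^ ((e + 1) * #p.1.2 + (∑ a ∈ p.1.1, a + ∑ b ∈ p.1.2, b)) := by
  let byCard : (Σ k, {A : Finset ℕ | #A = k + m} × {B : Finset ℕ | #B = k}) ≃
      {p : Finset ℕ × Finset ℕ | #p.1 = #p.2 + m} :=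
    { toFun x := ⟨(x.2.1, x.2.2), by rw [Set.mem_ofPred_eq, x.2.1.2, x.2.2.2]⟩
      invFun p := ⟨#p.1.2, ⟨p.1.1, p.2⟩, ⟨p.1.2, rfl⟩⟩
      left_inv := by rintro ⟨k, ⟨A, hA⟩, B, rfl⟩; rfl
      right_inv _ := rfl }
  have summable := byCard.summable_iff.2 (summable_X_pow_mul_card_add e m)
  rw [← byCard.tsum_eq]
  refine .trans (tsum_congr fun k ↦ ?_) summable.tsum_sigma.symm
  rw [distinctSeries_mul_distinctSeries, ← (summable_X_pow_sum_add_sum _ _).tsum_mul_left]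
  refine tsum_congr fun ⟨A, B, (hB : #B = k)⟩ ↦ ?_
  rw [← pow_add]
  exact congrArg (fun j ↦ X ^ ((e + 1) * j + _)) hB.symm

/-- The sum of the parts of the strongly concave composition encoded by `(c, A, B)`, namely of `c`,
of the `a + c + 1` for `a ∈ A`, and of the `b + c + 1` for `b ∈ B`. -/
def tripleWeight (t : ℕ × Finset ℕ × Finset ℕ) : ℕ :=
  t.1 + (t.1 + 1) * (#t.2.1 + #t.2.2) + (∑ a ∈ t.2.1, a + ∑ b ∈ t.2.2, b)

theorem finite_setOf_tripleWeight_le (n : ℕ) : {t | tripleWeight t ≤ n}.Finite :=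
  ((Set.finite_Iic n).prod (finite_setOf_sum_add_sum_le n)).subset
    fun t (ht : tripleWeight t ≤ n) ↦
      ⟨(Nat.le_add_right _ _).trans ((Nat.le_add_right _ _).trans ht),
        (Nat.le_add_left _ _).trans ht⟩

theorem tsum_X_pow_tripleWeight (l : ℕ) :
    ∑' t : {t : ℕ × Finset ℕ × Finset ℕ | #t.2.1 = #t.2.2 + l}, (X : ℤ⟦X⟧) ^ tripleWeight t =
      X ^ l * concaveSeries 1 l := by
  let split : ℕ × {p : Finset ℕ × Finset ℕ | #p.1 = #p.2 + l} ≃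
      {t : ℕ × Finset ℕ × Finset ℕ | #t.2.1 = #t.2.2 + l} :=
    { toFun x := ⟨(x.1, x.2.1), x.2.2⟩
      invFun t := (t.1.1, ⟨t.1.2, t.2⟩)
      left_inv _ := rfl
      right_inv _ := rfl }
  have summable : Summable fun t : {t : ℕ × Finset ℕ × Finset ℕ | #t.2.1 = #t.2.2 + l} ↦
      (X : ℤ⟦X⟧) ^ tripleWeight t :=
    summable_X_pow fun n ↦
      (finite_setOf_tripleWeight_le n).preimage Subtype.val_injective.injOn
  rw [← split.tsum_eq, concaveSeries, ← (summable_concaveSeries 1 l).tsum_mul_left]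
  refine (split.summable_iff.2 summable).tsum_prod.trans (tsum_congr fun c ↦ ?_)
  rw [pairSeries_eq_tsum, ← (summable_X_pow_mul_card_add _ _).tsum_mul_left,
    ← ((summable_X_pow_mul_card_add _ _).mul_left _).tsum_mul_left]
  refine tsum_congr fun ⟨⟨A, B⟩, (hAB : #A = #B + l)⟩ ↦ ?_
  rw [← pow_add, ← pow_add]
  refine congrArg (X ^ ·) (?_ : tripleWeight (c, A, B) = _)
  rw [tripleWeight, hAB]
  ring

/-- The increasing list of the elements of `A` translated by `c + 1`, so that `0 ∈ A` becomes the
least number above `c`. -/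
def listAbove (c : ℕ) (A : Finset ℕ) : List ℕ := (shift (c + 1) A).sort

theorem listAbove_injective (c : ℕ) : Function.Injective (listAbove c) := fun A B h ↦
  shift_injective (c + 1) <| by simpa only [listAbove, sort_toFinset] using congrArg List.toFinset h

theorem length_listAbove (c : ℕ) (A : Finset ℕ) : (listAbove c A).length = #A :=
  (length_sort _).trans (card_shift _ A)

theorem sum_listAbove (c : ℕ) (A : Finset ℕ) :
    (listAbove c A).sum = ∑ a ∈ A, a + (c + 1) * #A := by
  rw [← sum_shift, listAbove, ← sum_toList, ← Multiset.sum_coe, ← Multiset.sum_coe, sort_eq]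
  simp

theorem pairwise_cons_listAbove (c : ℕ) (A : Finset ℕ) :
    (c :: listAbove c A).Pairwise (· < ·) :=
  List.pairwise_cons.2
    ⟨fun _ h ↦ le_of_mem_shift ((mem_sort _).1 h), (sortedLT_sort _).pairwise⟩

theorem exists_listAbove_eq {c : ℕ} {L : List ℕ} (hL : (c :: L).Pairwise (· < ·)) :
    ∃ A, listAbove c A = L := by
  obtain ⟨lt_of_mem, sorted⟩ := List.pairwise_cons.1 hL
  obtain ⟨A, hA⟩ := exists_shift_eq (d := c + 1) fun a ha ↦ lt_of_mem a (List.mem_toFinset.1 ha)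
  refine ⟨A, ?_⟩
  rw [listAbove, hA, (List.toFinset_sort (· ≤ ·) (sorted.imp ne_of_lt)).2 (sorted.imp le_of_lt)]

section Pairwise

variable {α : Type*} (r : α → α → Prop) (L : List α) (k : ℕ)

theorem pairwise_take_iff_get :
    (L.take k).Pairwise r ↔
      ∀ i j : Fin L.length, (i : ℕ) < j → (j : ℕ) < k → r (L.get i) (L.get j) := by
  rw [List.pairwise_iff_getElem]
  constructor
  · intro h i j hij hj
    have hj' : (j : ℕ) < (L.take k).length := by rw [List.length_take]; omega
    simpa only [List.get_eq_getElem, List.getElem_take] using h i j (hij.trans hj') hj' hij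
  · intro h i j hi hj hij
    rw [List.length_take] at hi hj
    simpa only [List.get_eq_getElem, List.getElem_take] using
      h ⟨i, by omega⟩ ⟨j, by omega⟩ hij (hj.trans_le (min_le_left _ _))

theorem pairwise_drop_iff_get :
    (L.drop k).Pairwise r ↔
      ∀ i j : Fin L.length, k ≤ (i : ℕ) → (i : ℕ) < j → r (L.get i) (L.get j) := by
  rw [List.pairwise_iff_getElem]
  constructor
  · intro h i j hi hij
    have hij' : (i - k : ℕ) < j - k := by omega
    have hj' : (j - k : ℕ) < (L.drop k).length := by rw [List.length_drop]; omega
    simpa only [List.get_eq_getElem, List.getElem_drop, Nat.add_sub_cancel' hi,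
        Nat.add_sub_cancel' (hi.trans hij.le)] using
      h (i - k) (j - k) (hij'.trans hj') hj' hij'
  · intro h i j hi hj hij
    rw [List.length_drop] at hi hj
    simpa only [List.get_eq_getElem, List.getElem_drop] using
      h ⟨k + i, by omega⟩ ⟨k + j, by omega⟩ (Nat.le_add_right k i) (Nat.add_lt_add_left hij k)

end Pairwise

theorem isSCC_iff_pairwise (n : ℕ) (L : List ℕ) (k : ℕ) :
    IsSCC n L k ↔ 1 ≤ k ∧ k ≤ L.length ∧ L.sum = n ∧ (L.take k).Pairwise (· > ·) ∧
      (L.drop (k - 1)).Pairwise (· < ·) := by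
  rw [pairwise_take_iff_get, pairwise_drop_iff_get]
  rfl

/-- The strongly concave composition with central part `c` encoded by a triple `(c, A, B)`: the
sets `A` and `B` are its parts to the left and right of `c`, lowered by `c + 1`. It is paired with
the position of its central part. -/
def sccOfTriple (t : ℕ × Finset ℕ × Finset ℕ) : List ℕ × ℕ :=
  ((listAbove t.1 t.2.1).reverse ++ t.1 :: listAbove t.1 t.2.2, #t.2.1 + 1)

theorem sccOfTriple_injective : Function.Injective sccOfTriple := by
  rintro ⟨c, A, B⟩ ⟨c', A', B'⟩ h
  obtain ⟨lists_eq, cards_eq⟩ := Prod.mk.inj h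
  obtain ⟨left_eq, right_eq⟩ := List.append_inj lists_eq (by
    simpa only [List.length_reverse, length_listAbove] using Nat.succ_injective cards_eq)
  obtain ⟨center_eq, right_eq⟩ := List.cons.inj right_eq
  obtain rfl : c = c' := center_eq
  obtain rfl : A = A' := listAbove_injective c (List.reverse_injective left_eq)
  obtain rfl : B = B' := listAbove_injective c right_eq
  rfl

theorem sum_sccOfTriple (t : ℕ × Finset ℕ × Finset ℕ) :
    (sccOfTriple t).1.sum = tripleWeight t := by
  simp only [sccOfTriple, tripleWeight, List.sum_append, List.sum_reverse, List.sum_cons,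
    sum_listAbove]
  ring

theorem sccRank_sccOfTriple (t : ℕ × Finset ℕ × Finset ℕ) :
    sccRank (sccOfTriple t).1 (sccOfTriple t).2 = #t.2.2 - #t.2.1 := by
  simp only [sccRank, sccOfTriple, List.length_append, List.length_reverse, List.length_cons,
    length_listAbove]
  push_cast
  ring

theorem pairwise_concat_gt_iff (L : List ℕ) (c : ℕ) :
    (L ++ [c]).Pairwise (· > ·) ↔ (c :: L.reverse).Pairwise (· < ·) := by
  rw [← List.pairwise_reverse, List.reverse_append, List.reverse_singleton, List.singleton_append]

theorem isSCC_sccOfTriple (t : ℕ × Finset ℕ × Finset ℕ) :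
    IsSCC (tripleWeight t) (sccOfTriple t).1 (sccOfTriple t).2 := by
  obtain ⟨c, A, B⟩ := t
  have length_left : (listAbove c A).reverse.length = #A := by
    rw [List.length_reverse, length_listAbove]
  refine (isSCC_iff_pairwise _ _ _).2 ⟨Nat.le_add_left 1 _, ?_, sum_sccOfTriple _, ?_, ?_⟩
  · simp only [sccOfTriple, List.length_append, length_left, List.length_cons]
    omega
  · simp only [sccOfTriple, ← length_left, List.take_length_add_append, List.take_succ_cons,
      List.take_zero]
    rw [pairwise_concat_gt_iff, List.reverse_reverse]
    exact pairwise_cons_listAbove c A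
  · simp only [sccOfTriple, Nat.add_sub_cancel]
    rw [List.drop_left' length_left]
    exact pairwise_cons_listAbove c B

theorem exists_sccOfTriple_eq {n k : ℕ} {L : List ℕ} (h : IsSCC n L k) :
    ∃ t, sccOfTriple t = (L, k) := by
  obtain ⟨one_le, le_length, -, left, right⟩ := (isSCC_iff_pairwise n L k).1 h
  obtain ⟨k, rfl⟩ := Nat.exists_eq_add_of_le' one_le
  have drop_eq : L.drop k = L[k] :: L.drop (k + 1) := List.drop_eq_getElem_cons le_length
  rw [← List.take_concat_get' L k le_length, pairwise_concat_gt_iff] at left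
  rw [Nat.add_sub_cancel, drop_eq] at right
  obtain ⟨A, hA⟩ := exists_listAbove_eq left
  obtain ⟨B, hB⟩ := exists_listAbove_eq right
  have card_A : #A = k := by
    rw [← length_listAbove L[k], hA, List.length_reverse, List.length_take,
      min_eq_left (Nat.le_of_succ_le le_length)]
  refine ⟨(L[k], A, B), ?_⟩
  rw [sccOfTriple, hA, hB, List.reverse_reverse, ← drop_eq, List.take_append_drop, card_A]

theorem setOf_isSCC_and_sccRank_eq (n : ℕ) (ℓ : ℤ) :
    {p : List ℕ × ℕ | IsSCC n p.1 p.2 ∧ sccRank p.1 p.2 = ℓ} =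
      sccOfTriple '' {t | (#t.2.2 : ℤ) - #t.2.1 = ℓ ∧ tripleWeight t = n} := by
  ext ⟨L, k⟩
  constructor
  · rintro ⟨isSCC, rank_eq⟩
    obtain ⟨t, ht⟩ := exists_sccOfTriple_eq isSCC
    refine ⟨t, ⟨?_, ?_⟩, ht⟩
    · rw [← sccRank_sccOfTriple, ht, rank_eq]
    · rw [← sum_sccOfTriple, ht, isSCC.2.2.1]
  · rintro ⟨t, ⟨rank_eq, rfl⟩, ht⟩
    rw [← sccRank_sccOfTriple, ht] at rank_eq
    exact ⟨by simpa only [ht] using isSCC_sccOfTriple t, rank_eq⟩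

theorem Vd_eq_ncard (ℓ : ℤ) (n : ℕ) :
    Vd ℓ n = {t | (#t.2.2 : ℤ) - #t.2.1 = ℓ ∧ tripleWeight t = n}.ncard := by
  rw [Vd, setOf_isSCC_and_sccRank_eq, Set.ncard_image_of_injective _ sccOfTriple_injective]

theorem Vd_neg (ℓ : ℤ) (n : ℕ) : Vd (-ℓ) n = Vd ℓ n := by
  let reflect : ℕ × Finset ℕ × Finset ℕ ≃ ℕ × Finset ℕ × Finset ℕ :=
    (Equiv.refl ℕ).prodCongr (Equiv.prodComm _ _)
  have weight_reflect (t) : tripleWeight (reflect t) = tripleWeight t := by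
    simp only [tripleWeight, reflect, Equiv.prodCongr_apply, Equiv.prodComm_apply, Prod.map_fst,
      Prod.map_snd, Prod.fst_swap, Prod.snd_swap, Equiv.refl_apply, add_comm]
  rw [Vd_eq_ncard, Vd_eq_ncard, ← Set.ncard_preimage_of_injective_subset_range reflect.injective
    (reflect.range_eq_univ ▸ Set.subset_univ _)]
  congr 1
  ext t
  simp only [Set.mem_preimage, Set.mem_ofPred_eq, weight_reflect]
  refine and_congr_left' ?_
  change (#t.2.1 : ℤ) - #t.2.2 = -ℓ ↔ _
  omega

theorem Vd_eq_ncard_natAbs (ℓ : ℤ) (n : ℕ) :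
    Vd ℓ n = {t ∈ {t | #t.2.1 = #t.2.2 + ℓ.natAbs} | tripleWeight t = n}.ncard := by
  have Vd_eq : Vd ℓ n = Vd (-ℓ.natAbs) n := by
    obtain h | h := ℓ.natAbs_eq <;> nth_rw 1 [h]
    exact (Vd_neg _ n).symm
  rw [Vd_eq, Vd_eq_ncard]
  congr 1
  ext t
  exact and_congr_left' (by rw [Set.mem_ofPred_eq]; omega)

theorem Vd_eq_coeff (ℓ : ℤ) (n : ℕ) :
    (Vd ℓ n : ℤ) = coeff n (X ^ ℓ.natAbs * concaveSeries 1 ℓ.natAbs) := by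
  rw [Vd_eq_ncard_natAbs, ← tsum_X_pow_tripleWeight,
    coeff_tsum_X_pow finite_setOf_tripleWeight_le]

theorem stmt_0 (N : ℕ) (ℓ : ℤ) :
    (Vd ℓ (N + ℓ.natAbs * (ℓ.natAbs + 1) / 2) : ℤ) =
      ∑' n : ℕ,
        chi n * partitionCount ((N : ℤ) - 2 * n * (n + 1) / 3 - n * ℓ.natAbs) := by
  have exponent (l : ℕ) : l * (l + 1) / 2 = l + l.choose 2 :=
    calc l * (l + 1) / 2 = (l + 1).choose 2 := by
          rw [Nat.choose_two_right, Nat.add_sub_cancel, mul_comm]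
      _ = l + l.choose 2 := by rw [Nat.choose_succ_succ', Nat.choose_one_right]
  rw [Vd_eq_coeff, concaveSeries_one, ← mul_assoc, ← pow_add, exponent, coeff_X_pow_mul,
    coeff_partialTheta_mul_partitionSeries]
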